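/- Let Γ = ⟨a₀,…,a_g⟩ be a free numerical semigroup with structure constants n_i and let n_i a_i = ℓ₀^{(i)} a₀ + ⋯ + ℓ_{i−1}^{(i)} a_{i−1} be the standard representations with 0 ≤ ℓ_j^{(i)} < n_j for j ≥ 1. Then the binomials f_i = u_i^{n_i} − u₀^{ℓ₀^{(i)}} u₁^{ℓ₁^{(i)}} ⋯ u_{i−1}^{ℓ_{i−1}^{(i)}}, i = 1,…,g, generate the kernel of the ℂ-algebra map ℂ[u₀,…,u_g] → ℂ[t] sending u_i ↦ t^{a_i}, and f₁,…,f_g form a regular sequence. -/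

import Mathlib

open MvPolynomial

theorem MvPolynomial.ker_eq_of_normal_form {K σ τ : Type*} [Field K]
    (φ : MvPolynomial σ K →ₐ[K] MvPolynomial τ K) (w : (σ →₀ ℕ) → (τ →₀ ℕ))
    (hφ : ∀ m, φ (monomial m 1) = monomial (w m) 1)
    (J : Ideal (MvPolynomial σ K)) (hJ : J ≤ RingHom.ker φ)
    (N : Set (σ →₀ ℕ)) (hN : Set.InjOn w N)
    (hred : ∀ m, ∃ m' ∈ N, (monomial m 1 - monomial m' 1 : MvPolynomial σ K) ∈ J) :
    RingHom.ker φ = J := by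
  refine le_antisymm (fun p hp => ?_) hJ
  have hdisj : Disjoint
      (Submodule.span K (Set.range fun m : N => (monomial (m : σ →₀ ℕ) 1 : MvPolynomial σ K)))
      (LinearMap.ker φ.toLinearMap) := by
    apply Submodule.range_ker_disjoint
    have h := (basisMonomials τ K).linearIndependent.comp (fun m : N => w m)
      (Set.injOn_iff_injective.mp hN)
    have hcomp : φ.toLinearMap ∘ (fun m : N => (monomial (m : σ →₀ ℕ) 1 : MvPolynomial σ K)) =
        basisMonomials τ K ∘ fun m : N => w m := by
      ext1 m
      simp [hφ]
    rw [hcomp]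
    exact h
  have key : ∀ q : MvPolynomial σ K, ∃ q' ∈ Submodule.span K
      (Set.range fun m : N => (monomial (m : σ →₀ ℕ) 1 : MvPolynomial σ K)), q - q' ∈ J := by
    intro q
    induction q using MvPolynomial.induction_on' with
    | monomial m c =>
      obtain ⟨m', hm', h⟩ := hred m
      refine ⟨c • monomial m' 1,
        Submodule.smul_mem _ _ (Submodule.subset_span ⟨⟨m', hm'⟩, rfl⟩), ?_⟩
      have := J.mul_mem_left (C c) h
      rwa [mul_sub, C_mul_monomial, mul_one, ← smul_eq_C_mul] at this
    | add q r hq hr =>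
      obtain ⟨q', hq', hq⟩ := hq
      obtain ⟨r', hr', hr⟩ := hr
      refine ⟨q' + r', add_mem hq' hr', ?_⟩
      rw [add_sub_add_comm]
      exact add_mem hq hr
  obtain ⟨p', hp', h⟩ := key p
  have hp'0 : p' = 0 := by
    refine Submodule.disjoint_def.mp hdisj p' hp' ?_
    have h1 : φ (p - p') = 0 := hJ h
    rw [map_sub, RingHom.mem_ker.mp hp, zero_sub, neg_eq_zero] at h1
    exact h1
  simpa [hp'0] using h

theorem Nat.eq_of_sum_range_mul_eq {a e n : ℕ → ℕ} {g : ℕ} (ha : ∀ i ≤ g, 0 < a i)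
    (he : ∀ i, e i = (Finset.range (i + 1)).gcd a)
    (hn : ∀ i, 1 ≤ i → i ≤ g → n i * e i = e (i - 1)) {x y : ℕ → ℕ} {k : ℕ} (hk : k ≤ g)
    (hx : ∀ j, 1 ≤ j → j ≤ k → x j < n j) (hy : ∀ j, 1 ≤ j → j ≤ k → y j < n j)
    (h : ∑ j ∈ Finset.range (k + 1), x j * a j = ∑ j ∈ Finset.range (k + 1), y j * a j) :
    ∀ j ≤ k, x j = y j := by
  induction k with
  | zero =>
    intro j hj
    obtain rfl := Nat.le_zero.mp hj
    simpa [(ha 0 hk).ne'] using h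
  | succ k ih =>
    have hepos : ∀ i, 0 < e i := fun i => by
      rw [he, Nat.pos_iff_ne_zero, Ne, Finset.gcd_eq_zero_iff]
      exact fun h0 => (ha 0 (Nat.zero_le _)).ne' (h0 0 (by simp))
    have hdvd : ∀ z : ℕ → ℕ, ∑ j ∈ Finset.range (k + 1), z j * a j ≡ 0 [MOD e k] := fun z =>
      (Nat.modEq_zero_iff_dvd.mpr <| Finset.dvd_sum fun j hj =>
        Dvd.dvd.mul_left ((he k).symm ▸ Finset.gcd_dvd hj) _)
    have hgcd : e (k + 1) = Nat.gcd (e k) (a (k + 1)) := by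
      rw [he, he, Finset.range_add_one (n := k + 1), Finset.gcd_insert, Nat.gcd_comm]
      rfl
    have hmod : a (k + 1) * x (k + 1) ≡ a (k + 1) * y (k + 1) [MOD e k] := by
      rw [Finset.sum_range_succ, Finset.sum_range_succ _ (k + 1)] at h
      have h1 := Nat.ModEq.add_right (x (k + 1) * a (k + 1)) (hdvd x)
      have h2 := Nat.ModEq.add_right (y (k + 1) * a (k + 1)) (hdvd y)
      rw [h] at h1
      simpa [mul_comm] using h1.symm.trans h2
    have hquot : e k / Nat.gcd (e k) (a (k + 1)) = n (k + 1) := by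
      rw [← hgcd, ← show n (k + 1) * e (k + 1) = e k from hn (k + 1) (by omega) hk,
        Nat.mul_div_cancel _ (hepos _)]
    have hlast : x (k + 1) = y (k + 1) := by
      have h1 := Nat.ModEq.cancel_left_div_gcd (hepos k) hmod
      rw [hquot] at h1
      exact h1.eq_of_lt_of_lt (hx _ (by omega) le_rfl) (hy _ (by omega) le_rfl)
    have hinit := ih (by omega) (fun j h1 h2 => hx j h1 (by omega))
      (fun j h1 h2 => hy j h1 (by omega)) (by
        rw [Finset.sum_range_succ, Finset.sum_range_succ _ (k + 1), hlast] at h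
        exact Nat.add_right_cancel h)
    intro j hj
    rcases Nat.lt_or_ge k j with hj' | hj'
    · rwa [show j = k + 1 by omega]
    · exact hinit j hj'

namespace FreeNumericalSemigroup

variable {K : Type*} [Field K] {g : ℕ}

/-- The algebra map `u_j ↦ t ^ a_j` for `j ≤ k` and `u_j ↦ u_j` for `j > k`; the variable `t` is
`X none`. -/
noncomputable def truncatedHom (K : Type*) [Field K] (g : ℕ) (a : ℕ → ℕ) (k : ℕ) :
    MvPolynomial (Fin (g + 1)) K →ₐ[K] MvPolynomial (Option (Fin (g + 1))) K :=
  aeval fun j => if (j : ℕ) ≤ k then X none ^ a j else X (some j)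

/-- The action of `truncatedHom` on exponents of monomials. -/
noncomputable def truncatedWeight (a : ℕ → ℕ) (k : ℕ) (m : Fin (g + 1) →₀ ℕ) :
    Option (Fin (g + 1)) →₀ ℕ :=
  ∑ j, m j • if (j : ℕ) ≤ k then Finsupp.single none (a j) else Finsupp.single (some j) 1

theorem truncatedHom_monomial (a : ℕ → ℕ) (k : ℕ) (m : Fin (g + 1) →₀ ℕ) :
    truncatedHom K g a k (monomial m 1) = monomial (truncatedWeight a k m) 1 := by
  rw [truncatedHom, aeval_monomial, truncatedWeight, monomial_sum_one, map_one, one_mul,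
    Finsupp.prod_fintype _ _ (by simp)]
  refine Finset.prod_congr rfl fun j _ => ?_
  split_ifs
  · rw [X_pow_eq_monomial, monomial_pow, one_pow]
  · rw [X, monomial_pow, one_pow]

theorem truncatedWeight_none (a : ℕ → ℕ) {k : ℕ} (hk : k ≤ g) (m : Fin (g + 1) →₀ ℕ) :
    truncatedWeight a k m none =
      ∑ j ∈ Finset.range (k + 1), m (Fin.ofNat (g + 1) j) * a j := by
  have h : truncatedWeight a k m none =
      ∑ j : Fin (g + 1), if (j : ℕ) < k + 1 then m (Fin.ofNat (g + 1) j) * a j else 0 := by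
    rw [truncatedWeight, Finsupp.finsetSum_apply]
    refine Finset.sum_congr rfl fun j _ => ?_
    simp only [Nat.lt_succ_iff]
    split_ifs <;> simp
  rw [h, Fin.sum_univ_eq_sum_range
    (fun j => if j < k + 1 then m (Fin.ofNat (g + 1) j) * a j else 0) (g + 1),
    ← Finset.sum_filter]
  congr 1
  ext j
  simp only [Finset.mem_filter, Finset.mem_range]
  omega

theorem truncatedWeight_some (a : ℕ → ℕ) {k : ℕ} (m : Fin (g + 1) →₀ ℕ) {j : Fin (g + 1)}
    (hj : k < j) : truncatedWeight a k m (some j) = m j := by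
  rw [truncatedWeight, Finsupp.finsetSum_apply, Finset.sum_eq_single j]
  · simp [Nat.not_le.mpr hj]
  · intro i _ hij
    split_ifs <;> simp [hij]
  · simp

theorem truncatedWeight_injOn {a e n : ℕ → ℕ} (ha : ∀ i ≤ g, 0 < a i)
    (he : ∀ i, e i = (Finset.range (i + 1)).gcd a)
    (hn : ∀ i, 1 ≤ i → i ≤ g → n i * e i = e (i - 1)) {k : ℕ} (hk : k ≤ g) :
    Set.InjOn (truncatedWeight (g := g) a k)
      {m | ∀ j : Fin (g + 1), 1 ≤ (j : ℕ) → (j : ℕ) ≤ k → m j < n j} := by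
  intro x hx y hy hxy
  have hbound : ∀ z ∈ {m : Fin (g + 1) →₀ ℕ | ∀ j : Fin (g + 1), 1 ≤ (j : ℕ) → (j : ℕ) ≤ k →
      m j < n j}, ∀ j, 1 ≤ j → j ≤ k → z (Fin.ofNat (g + 1) j) < n j := by
    intro z hz j h1 h2
    have hj : ((Fin.ofNat (g + 1) j : Fin (g + 1)) : ℕ) = j := Nat.mod_eq_of_lt (by omega)
    simpa only [hj] using hz (Fin.ofNat (g + 1) j) (by omega) (by omega)
  have hnone := DFunLike.congr_fun hxy none
  rw [truncatedWeight_none a hk, truncatedWeight_none a hk] at hnone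
  have hlow := Nat.eq_of_sum_range_mul_eq ha he hn hk (hbound x hx) (hbound y hy) hnone
  ext j
  rcases Nat.lt_or_ge k j with hj | hj
  · simpa only [truncatedWeight_some a _ hj] using DFunLike.congr_fun hxy (some j)
  · simpa using hlow j hj

/-- The binomial `u_{i+1} ^ n_{i+1} - ∏_{j ≤ i} u_j ^ ℓ_j`. -/
noncomputable def binomial (K : Type*) [Field K] (n : ℕ → ℕ) (ℓ : ℕ → ℕ → ℕ) (i : Fin g) :
    MvPolynomial (Fin (g + 1)) K :=
  X i.succ ^ n ((i : ℕ) + 1) -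
    ∏ j : Fin (g + 1), X j ^ (if (j : ℕ) < (i : ℕ) + 1 then ℓ ((i : ℕ) + 1) (j : ℕ) else 0)

theorem truncatedHom_binomial_eq_zero {a n : ℕ → ℕ} {ℓ : ℕ → ℕ → ℕ}
    (hrep : ∀ i, 1 ≤ i → i ≤ g → n i * a i = ∑ j ∈ Finset.range i, ℓ i j * a j) {k : ℕ}
    {i : Fin g} (hi : (i : ℕ) < k) : truncatedHom K g a k (binomial K n ℓ i) = 0 := by
  have hprod : ∀ j : Fin (g + 1), (if (j : ℕ) ≤ k then
      (X none ^ a j : MvPolynomial (Option (Fin (g + 1))) K) else X (some j)) ^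
        (if (j : ℕ) < (i : ℕ) + 1 then ℓ ((i : ℕ) + 1) (j : ℕ) else 0) =
      X none ^ (if (j : ℕ) < (i : ℕ) + 1 then ℓ ((i : ℕ) + 1) (j : ℕ) * a j else 0) := by
    intro j
    by_cases hj : (j : ℕ) < (i : ℕ) + 1
    · rw [if_pos hj, if_pos hj, if_pos (by omega), ← pow_mul, mul_comm]
    · simp [hj]
  have hsum : ∑ j : Fin (g + 1), (if (j : ℕ) < (i : ℕ) + 1 then
      ℓ ((i : ℕ) + 1) (j : ℕ) * a j else 0) = n (i + 1) * a (i + 1) := by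
    rw [hrep _ (by omega) (by omega), Fin.sum_univ_eq_sum_range
      (fun j => if j < (i : ℕ) + 1 then ℓ ((i : ℕ) + 1) j * a j else 0), ← Finset.sum_filter]
    congr 1
    ext j
    simp only [Finset.mem_filter, Finset.mem_range]
    omega
  simp only [truncatedHom, binomial, map_sub, map_pow, map_prod, aeval_X]
  rw [Finset.prod_congr rfl fun j _ => hprod j, Finset.prod_pow_eq_pow_sum, hsum,
    Fin.val_succ, if_pos (by omega), ← pow_mul, mul_comm, sub_self]

theorem truncatedHom_binomial_ne_zero (a : ℕ → ℕ) {n : ℕ → ℕ} (ℓ : ℕ → ℕ → ℕ) (i : Fin g)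
    (hn : n (i + 1) ≠ 0) : truncatedHom K g a i (binomial K n ℓ i) ≠ 0 := by
  intro h
  have h1 := congrArg (aeval (fun o : Option (Fin (g + 1)) => o.elim (1 : K) fun _ => 0)) h
  have hprod : ∏ j : Fin (g + 1), (aeval fun o : Option (Fin (g + 1)) => o.elim (1 : K) fun _ => 0)
      (if (j : ℕ) ≤ i then (X none ^ a j : MvPolynomial (Option (Fin (g + 1))) K)
        else X (some j)) ^
        (if (j : ℕ) < (i : ℕ) + 1 then ℓ ((i : ℕ) + 1) (j : ℕ) else 0) = 1 := by
    refine Finset.prod_eq_one fun j _ => ?_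
    by_cases hj : (j : ℕ) < (i : ℕ) + 1
    · simp [hj, Nat.lt_succ_iff.mp hj]
    · simp [hj]
  simp only [truncatedHom, binomial, map_sub, map_pow, map_prod, aeval_X] at h1
  rw [hprod] at h1
  simp [hn] at h1

theorem monomial_sub_monomial_mem {σ : Type*} {J : Ideal (MvPolynomial σ K)} {u v : σ →₀ ℕ}
    (h : (monomial u 1 - monomial v 1 : MvPolynomial σ K) ∈ J) (q : ℕ) (c : σ →₀ ℕ) :
    (monomial (q • u + c) 1 - monomial (q • v + c) 1 : MvPolynomial σ K) ∈ J := by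
  have hdvd := sub_dvd_pow_sub_pow (monomial u 1 : MvPolynomial σ K) (monomial v 1) q
  have := J.mul_mem_right (monomial c 1) (J.mem_of_dvd hdvd h)
  simpa [sub_mul, monomial_pow, monomial_mul] using this

theorem exists_reduced_monomial {n : ℕ → ℕ} {ℓ : ℕ → ℕ → ℕ}
    (hn : ∀ i, 1 ≤ i → i ≤ g → 0 < n i) {J : Ideal (MvPolynomial (Fin (g + 1)) K)} {k : ℕ}
    (hk : k ≤ g) (hJ : ∀ i : Fin g, (i : ℕ) < k → binomial K n ℓ i ∈ J)
    (m : Fin (g + 1) →₀ ℕ) :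
    ∃ m' : Fin (g + 1) →₀ ℕ, (∀ j : Fin (g + 1), 1 ≤ (j : ℕ) → (j : ℕ) ≤ k → m' j < n j) ∧
      (∀ j : Fin (g + 1), k < j → m' j = m j) ∧
      (monomial m 1 - monomial m' 1 : MvPolynomial (Fin (g + 1)) K) ∈ J := by
  induction k generalizing m with
  | zero => exact ⟨m, fun j h1 h2 => by omega, fun _ _ => rfl, by simp⟩
  | succ k ih =>
    let i : Fin g := ⟨k, hk⟩
    let L : Fin (g + 1) →₀ ℕ := Finsupp.equivFunOnFinite.symm
      fun j => if (j : ℕ) < k + 1 then ℓ (k + 1) j else 0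
    let q := m i.succ / n (k + 1)
    let c := m.erase i.succ + Finsupp.single i.succ (m i.succ % n (k + 1))
    have hbin : binomial K n ℓ i =
        monomial (Finsupp.single i.succ (n (k + 1))) 1 - monomial L 1 := by
      rw [binomial, X_pow_eq_monomial, monomial_eq (s := L), Finsupp.prod_fintype _ _ (by simp),
        C_1, one_mul]
      rfl
    have hm : m = q • Finsupp.single i.succ (n (k + 1)) + c := by
      ext j
      by_cases hj : j = i.succ
      · subst hj
        simp [q, c, Nat.div_add_mod']
      · simp [q, c, hj]
    have hmem := monomial_sub_monomial_mem (hbin ▸ hJ i (Nat.lt_succ_self k)) q c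
    rw [← hm] at hmem
    obtain ⟨m', hlow, hhigh, hmem'⟩ :=
      ih (by omega) (fun i hi => hJ i (by omega)) (q • L + c)
    refine ⟨m', fun j h1 h2 => ?_, fun j hj => ?_, by simpa using add_mem hmem hmem'⟩
    · rcases Nat.lt_or_ge k j with hj | hj
      · have hjk : (j : ℕ) = k + 1 := by omega
        have hji : j = i.succ := Fin.ext hjk
        rw [hhigh j hj, hjk, hji]
        simpa [L, c, i] using Nat.mod_lt _ (hn (k + 1) (by omega) hk)
      · exact hlow j h1 hj
    · have hji : j ≠ i.succ := fun h => by simp [h, i] at hj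
      rw [hhigh j (by omega)]
      simp [L, c, hji, show ¬ (j : ℕ) ≤ k by omega]

theorem ker_truncatedHom {a e n : ℕ → ℕ} {ℓ : ℕ → ℕ → ℕ} (ha : ∀ i ≤ g, 0 < a i)
    (he : ∀ i, e i = (Finset.range (i + 1)).gcd a)
    (hn : ∀ i, 1 ≤ i → i ≤ g → n i * e i = e (i - 1))
    (hn0 : ∀ i, 1 ≤ i → i ≤ g → 0 < n i)
    (hrep : ∀ i, 1 ≤ i → i ≤ g → n i * a i = ∑ j ∈ Finset.range i, ℓ i j * a j)
    {k : ℕ} (hk : k ≤ g) :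
    RingHom.ker (truncatedHom K g a k) =
      Ideal.span (binomial K n ℓ '' {i : Fin g | (i : ℕ) < k}) := by
  refine ker_eq_of_normal_form _ _ (truncatedHom_monomial a k) _ ?_ _
    (truncatedWeight_injOn ha he hn hk) fun m => ?_
  · rw [Ideal.span_le]
    rintro _ ⟨i, hi, rfl⟩
    exact truncatedHom_binomial_eq_zero hrep hi
  · obtain ⟨m', hm', -, hmem⟩ := exists_reduced_monomial (K := K) (ℓ := ℓ) hn0 hk
      (fun i hi => Ideal.subset_span (Set.mem_image_of_mem _ hi)) m
    exact ⟨m', hm', hmem⟩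

theorem ker_aeval_X_pow (a : ℕ → ℕ) :
    RingHom.ker (aeval fun i : Fin (g + 1) => (Polynomial.X : Polynomial K) ^ a i) =
      RingHom.ker (truncatedHom K g a g) := by
  have h1 : truncatedHom K g a g = (Polynomial.aeval (X none)).comp
      (aeval fun i : Fin (g + 1) => (Polynomial.X : Polynomial K) ^ a i) := by
    ext1 j
    simp [truncatedHom, Nat.lt_succ_iff.mp j.isLt]
  have h2 : (aeval fun i : Fin (g + 1) => (Polynomial.X : Polynomial K) ^ a i) =
      (aeval fun o : Option (Fin (g + 1)) => o.elim Polynomial.X fun _ => 0).comp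
        (truncatedHom K g a g) := by
    ext1 j
    simp [truncatedHom, Nat.lt_succ_iff.mp j.isLt]
  ext p
  simp only [RingHom.mem_ker]
  constructor
  · intro h
    rw [h1, AlgHom.comp_apply, h, map_zero]
  · intro h
    rw [h2, AlgHom.comp_apply, h, map_zero]

theorem ofList_take_ofFn {R : Type*} [CommSemiring R] (f : Fin g → R) (k : ℕ) :
    Ideal.ofList ((List.ofFn f).take k) = Ideal.span (f '' {i : Fin g | (i : ℕ) < k}) := by
  rw [Ideal.ofList]
  congr 1
  ext x
  simp only [Set.mem_ofPred_eq, List.mem_take_iff_getElem, List.length_ofFn, List.getElem_ofFn,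
    Set.mem_image]
  constructor
  · rintro ⟨i, hi, rfl⟩
    exact ⟨⟨i, by omega⟩, show i < k by omega, rfl⟩
  · rintro ⟨i, hi, rfl⟩
    exact ⟨i, by omega, rfl⟩

end FreeNumericalSemigroup

/-- For a free numerical semigroup `Γ = ⟨a₀,…,a_g⟩` with standard representations
`n_i a_i = ∑_{j<i} ℓ_j^{(i)} a_j` (`ℓ_j^{(i)} < n_j` for `j ≥ 1`), the binomials
`f_i = u_i^{n_i} − ∏_{j<i} u_j^{ℓ_j^{(i)}}` generate the kernel of the map
`u_i ↦ t^{a_i}` and form a regular sequence. -/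
theorem stmt4 (g : ℕ) (a : ℕ → ℕ) (hpos : ∀ i, i ≤ g → 0 < a i)
    (e : ℕ → ℕ) (he : ∀ i, e i = (Finset.range (i + 1)).gcd a)
    (hgcd : e g = 1)
    (n : ℕ → ℕ) (hn : ∀ i, 1 ≤ i → i ≤ g → n i * e i = e (i - 1))
    (ℓ : ℕ → ℕ → ℕ)
    (hrep : ∀ i, 1 ≤ i → i ≤ g →
      n i * a i = ∑ j ∈ Finset.range i, ℓ i j * a j)
    (hℓ : ∀ i j, 1 ≤ j → j < i → i ≤ g → ℓ i j < n j)
    (f : Fin g → MvPolynomial (Fin (g + 1)) ℂ)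
    (hf : ∀ i : Fin g,
      f i = X i.succ ^ n ((i : ℕ) + 1) -
        ∏ j : Fin (g + 1),
          X j ^ (if (j : ℕ) < (i : ℕ) + 1 then ℓ ((i : ℕ) + 1) (j : ℕ) else 0)) :
    RingHom.ker (MvPolynomial.aeval
        (fun i : Fin (g + 1) => (Polynomial.X : Polynomial ℂ) ^ a i) :
        MvPolynomial (Fin (g + 1)) ℂ →ₐ[ℂ] Polynomial ℂ).toRingHom
      = Ideal.span (Set.range f) ∧
    RingTheory.Sequence.IsRegular (MvPolynomial (Fin (g + 1)) ℂ) (List.ofFn f) := by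
  obtain rfl : f = FreeNumericalSemigroup.binomial ℂ n ℓ := funext hf
  have hn0 : ∀ i, 1 ≤ i → i ≤ g → 0 < n i := by
    refine fun i h1 h2 => Nat.pos_of_ne_zero fun h0 => ?_
    have h := hn i h1 h2
    rw [h0, zero_mul, he, eq_comm, Finset.gcd_eq_zero_iff] at h
    exact (hpos 0 (Nat.zero_le _)).ne' (h 0 (by simp))
  have hker := fun k (hk : k ≤ g) =>
    FreeNumericalSemigroup.ker_truncatedHom (K := ℂ) hpos he hn hn0 hrep hk
  have hspan : Ideal.span (Set.range (FreeNumericalSemigroup.binomial (g := g) ℂ n ℓ)) =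
      RingHom.ker (FreeNumericalSemigroup.truncatedHom ℂ g a g) := by
    rw [hker g le_rfl, ← Set.image_univ]
    congr 2
    ext i
    simp
  refine ⟨(FreeNumericalSemigroup.ker_aeval_X_pow a).trans hspan.symm, ⟨⟨fun i hi => ?_⟩, ?_⟩⟩
  · rw [List.length_ofFn] at hi
    rw [isSMulRegular_quotient_iff_mem_of_smul_mem, smul_eq_mul, Ideal.mul_top,
      FreeNumericalSemigroup.ofList_take_ofFn, ← hker i hi.le]
    intro x hx
    rw [List.getElem_ofFn, smul_eq_mul, RingHom.mem_ker, map_mul] at hx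
    exact (mul_eq_zero.mp hx).resolve_left
      (FreeNumericalSemigroup.truncatedHom_binomial_ne_zero a ℓ ⟨i, hi⟩ (hn0 _ (by omega) hi).ne')
  · rw [smul_eq_mul, Ideal.mul_top, ← List.take_length (l := List.ofFn _),
      FreeNumericalSemigroup.ofList_take_ofFn, List.length_ofFn, ← hker g le_rfl]
    exact (RingHom.ker_ne_top _).symm
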